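/- arXiv:1402.5559 — 5 statements merged into one kernel-verified Lean document; each statement's English description precedes it below -/
import Mathlib

section
/- Let K : ℝ → ℝ be continuous and let a, b be scalar Jacobi fields for K with W := a(t₁)·b'(t₁) − a'(t₁)·b(t₁) ≠ 0. Suppose t₁ ≠ t₂ and λ₁, λ₂ are nonzero real numbers with λ₁·a(t₁) = λ₂·a(t₂) and λ₁·b(t₁) = λ₂·b(t₂). Then c(t) := a(t₁)·b(t) − b(t₁)·a(t) is a nontrivial scalar Jacobi field vanishing at both t₁ and t₂ (so t₁ and t₂ are conjugate for K), and moreover c'(t₁) = W and λ₁·c'(t₂) = λ₂·W; equivalently, with λ := λ₁/W ≠ 0 one has λ₁ = λ·c'(t₁) and λ₂ = λ·c'(t₂). -/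
/-- A scalar Jacobi field for the curvature function `K` is a `C²` function `c : ℝ → ℝ`
satisfying `c'' + K c = 0`. -/
def IsJacobiField (K : ℝ → ℝ) (c : ℝ → ℝ) : Prop :=
  ContDiff ℝ 2 c ∧ ∀ t : ℝ, deriv (deriv c) t + K t * c t = 0

/-- If `λ₁ a(t₁) = λ₂ a(t₂)` and `λ₁ b(t₁) = λ₂ b(t₂)` with `λ₁, λ₂ ≠ 0` and `t₁ ≠ t₂`,
then `c(t) = a(t₁) b(t) − b(t₁) a(t)` is a nontrivial Jacobi field vanishing at `t₁` and
`t₂` (so `t₁, t₂` are conjugate), with `c'(t₁) = W`, `λ₁ c'(t₂) = λ₂ W`; equivalently,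
with `λ := λ₁/W ≠ 0` one has `λ₁ = λ c'(t₁)` and `λ₂ = λ c'(t₂)`. -/
theorem conjugate_points_from_equal_projections (K a b : ℝ → ℝ) (hK : Continuous K)
    (ha : IsJacobiField K a) (hb : IsJacobiField K b)
    (t₁ t₂ : ℝ) (ht : t₁ ≠ t₂)
    (W : ℝ) (hW : W = a t₁ * deriv b t₁ - deriv a t₁ * b t₁) (hW0 : W ≠ 0)
    (l₁ l₂ : ℝ) (hl₁ : l₁ ≠ 0) (hl₂ : l₂ ≠ 0)
    (hea : l₁ * a t₁ = l₂ * a t₂) (heb : l₁ * b t₁ = l₂ * b t₂)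
    (c : ℝ → ℝ) (hcdef : c = fun t => a t₁ * b t - b t₁ * a t) :
    IsJacobiField K c ∧ ¬ (∀ t : ℝ, c t = 0) ∧ c t₁ = 0 ∧ c t₂ = 0 ∧
    deriv c t₁ = W ∧ l₁ * deriv c t₂ = l₂ * W ∧
    (l₁ / W ≠ 0 ∧ l₁ = (l₁ / W) * deriv c t₁ ∧ l₂ = (l₁ / W) * deriv c t₂) := by
  obtain ⟨ha2, haJ⟩ := ha
  obtain ⟨hb2, hbJ⟩ := hb
  have da : Differentiable ℝ a := ha2.differentiable (by norm_num)
  have db : Differentiable ℝ b := hb2.differentiable (by norm_num)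
  have dda : Differentiable ℝ (deriv a) := ha2.differentiable_deriv_two
  have ddb : Differentiable ℝ (deriv b) := hb2.differentiable_deriv_two
  have hc1 : deriv c = fun t => a t₁ * deriv b t - b t₁ * deriv a t := by
    funext t
    rw [hcdef]
    exact (((db t).hasDerivAt.const_mul (a t₁)).sub ((da t).hasDerivAt.const_mul (b t₁))).deriv
  have hc2 : ∀ t, deriv (deriv c) t = a t₁ * deriv (deriv b) t - b t₁ * deriv (deriv a) t := by
    intro t
    rw [hc1]
    exact (((ddb t).hasDerivAt.const_mul (a t₁)).sub
      ((dda t).hasDerivAt.const_mul (b t₁))).deriv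
  have hw : ∀ t, HasDerivAt (fun t => a t * deriv b t - deriv a t * b t) 0 t := by
    intro t
    have h := ((da t).hasDerivAt.mul (ddb t).hasDerivAt).sub
      ((dda t).hasDerivAt.mul (db t).hasDerivAt)
    refine h.congr_deriv ?_
    linear_combination a t * hbJ t - b t * haJ t
  have hconst := is_const_of_deriv_eq_zero (fun t => (hw t).differentiableAt)
    (fun t => (hw t).deriv) t₁ t₂
  have e1 : deriv c t₁ = W := by
    rw [hc1, hW]
    ring
  have e2 : l₁ * deriv c t₂ = l₂ * W := by
    rw [hc1, hW, hconst]
    linear_combination deriv b t₂ * hea - deriv a t₂ * heb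
  refine ⟨⟨?_, ?_⟩, ?_, ?_, ?_, e1, e2, div_ne_zero hl₁ hW0, ?_, ?_⟩
  · rw [hcdef]
    exact (contDiff_const.mul hb2).sub (contDiff_const.mul ha2)
  · intro t
    rw [hc2, hcdef]
    linear_combination a t₁ * hbJ t - b t₁ * haJ t
  · intro h
    apply hW0
    have h0 : c = fun _ => (0 : ℝ) := funext h
    rw [← e1, h0]
    simp
  · rw [hcdef]
    ring
  · apply mul_left_cancel₀ hl₂
    rw [hcdef]
    linear_combination b t₁ * hea - a t₁ * heb
  · rw [e1]
    field_simp
  · field_simp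
    linarith
end

section
/- Let K : ℝ → ℝ be continuous, let a, b be scalar Jacobi fields for K whose Wronskian is nonzero at some point, and let c be a nontrivial scalar Jacobi field for K with c(t₁) = c(t₂) = 0, where t₁ ≠ t₂. Then c'(t₁) ≠ 0, c'(t₂) ≠ 0, c'(t₁)·a(t₁) = c'(t₂)·a(t₂), and c'(t₁)·b(t₁) = c'(t₂)·b(t₂). In particular, for any λ ≠ 0 the numbers λ₁ := λ·c'(t₁) and λ₂ := λ·c'(t₂) are nonzero and satisfy λ₁·a(t₁) = λ₂·a(t₂) and λ₁·b(t₁) = λ₂·b(t₂). -/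
lemma jacobi_wronskian_const {K f g : ℝ → ℝ} (hf : IsJacobiField K f)
    (hg : IsJacobiField K g) (s t : ℝ) :
    f s * deriv g s - deriv f s * g s = f t * deriv g t - deriv f t * g t := by
  have key : ∀ h : ℝ → ℝ, IsJacobiField K h →
      (∀ x, HasDerivAt h (deriv h x) x) ∧ ∀ x, HasDerivAt (deriv h) (-(K x * h x)) x := by
    intro h hh
    have h2 : ContDiff ℝ (1 + 1) h := by
      have := hh.1
      rwa [← one_add_one_eq_two] at this
    have h3 := contDiff_succ_iff_deriv.1 h2
    refine ⟨fun x => (h3.1 x).hasDerivAt, fun x => ?_⟩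
    have h4 := (h3.2.2.differentiable one_ne_zero x).hasDerivAt
    rwa [eq_neg_of_add_eq_zero_left (hh.2 x)] at h4
  obtain ⟨f1, f2⟩ := key f hf
  obtain ⟨g1, g2⟩ := key g hg
  have hd : ∀ x, HasDerivAt (fun x => f x * deriv g x - deriv f x * g x) 0 x := by
    intro x
    refine HasDerivAt.congr_deriv (((f1 x).mul (g2 x)).sub ((f2 x).mul (g1 x))) ?_
    ring
  exact is_const_of_deriv_eq_zero (fun x => (hd x).differentiableAt) (fun x => (hd x).deriv) s t

/-- If a nontrivial Jacobi field `c` vanishes at `t₁ ≠ t₂`, then `c'(t₁) ≠ 0`,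
`c'(t₂) ≠ 0`, and `c'(t₁) a(t₁) = c'(t₂) a(t₂)`, `c'(t₁) b(t₁) = c'(t₂) b(t₂)`;
in particular for any `λ ≠ 0` the nonzero numbers `λ₁ = λ c'(t₁)`, `λ₂ = λ c'(t₂)`
satisfy `λ₁ a(t₁) = λ₂ a(t₂)` and `λ₁ b(t₁) = λ₂ b(t₂)`. -/
theorem equal_projections_from_conjugate_points (K a b c : ℝ → ℝ) (hK : Continuous K)
    (ha : IsJacobiField K a) (hb : IsJacobiField K b)
    (hW : ∃ t₀ : ℝ, a t₀ * deriv b t₀ - deriv a t₀ * b t₀ ≠ 0)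
    (hc : IsJacobiField K c) (hcne : ¬ ∀ t : ℝ, c t = 0)
    (t₁ t₂ : ℝ) (ht : t₁ ≠ t₂) (h1 : c t₁ = 0) (h2 : c t₂ = 0) :
    deriv c t₁ ≠ 0 ∧ deriv c t₂ ≠ 0 ∧
    deriv c t₁ * a t₁ = deriv c t₂ * a t₂ ∧
    deriv c t₁ * b t₁ = deriv c t₂ * b t₂ ∧
    ∀ l : ℝ, l ≠ 0 →
      l * deriv c t₁ ≠ 0 ∧ l * deriv c t₂ ≠ 0 ∧
      (l * deriv c t₁) * a t₁ = (l * deriv c t₂) * a t₂ ∧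
      (l * deriv c t₁) * b t₁ = (l * deriv c t₂) * b t₂ := by
  have ne : ∀ t, c t = 0 → deriv c t ≠ 0 := by
    intro t h h'
    apply hcne
    intro s
    obtain ⟨t₀, h0⟩ := hW
    have e1 := jacobi_wronskian_const ha hc s t
    have e2 := jacobi_wronskian_const hb hc s t
    have e3 := jacobi_wronskian_const ha hb s t₀
    rw [h, h'] at e1 e2
    rw [← e3] at h0
    apply (mul_eq_zero.1 _).resolve_left h0
    linear_combination b s * e1 - a s * e2
  have e1 := jacobi_wronskian_const ha hc t₁ t₂
  have e2 := jacobi_wronskian_const hb hc t₁ t₂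
  rw [h1, h2] at e1 e2
  refine ⟨ne _ h1, ne _ h2, by linarith, by linarith, fun l hl =>
    ⟨mul_ne_zero hl (ne _ h1), mul_ne_zero hl (ne _ h2), ?_, ?_⟩⟩
  · linear_combination l * e1
  · linear_combination l * e2
end

section
/- Let K : ℝ → ℝ be continuous, let a, b be scalar Jacobi fields for K whose Wronskian is nonzero at some point, and let t₁ ≠ t₂. Then there exist nonzero real numbers λ₁, λ₂ with λ₁·a(t₁) = λ₂·a(t₂) and λ₁·b(t₁) = λ₂·b(t₂) if and only if t₁ and t₂ are conjugate for K, i.e., some nontrivial scalar Jacobi field vanishes at both t₁ and t₂. (Scalar form of the characterization of when 𝒞(p₁,ξ¹) = 𝒞(p₂,ξ²) for the canonical map of the 2D geodesic X-ray transform.) -/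
theorem IsJacobiField.hasDeriv {K c : ℝ → ℝ} (h : IsJacobiField K c) (t : ℝ) :
    HasDerivAt c (deriv c t) t :=
  (h.1.differentiable (by norm_num)).differentiableAt.hasDerivAt

theorem IsJacobiField.hasDeriv2 {K c : ℝ → ℝ} (h : IsJacobiField K c) (t : ℝ) :
    HasDerivAt (deriv c) (-(K t * c t)) t := by
  have h1 : ContDiff ℝ 1 (deriv c) := by
    have := h.1
    rw [show (2 : WithTop ℕ∞) = 1 + 1 by norm_num, contDiff_succ_iff_deriv] at this
    exact this.2.2
  have h2 := (h1.differentiable (by norm_num)).differentiableAt (x := t) |>.hasDerivAt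
  have h3 := h.2 t
  rwa [show deriv (deriv c) t = -(K t * c t) by linarith] at h2

/-- The Wronskian of two Jacobi fields is constant. -/
theorem IsJacobiField.wronskian_const {K a b : ℝ → ℝ} (ha : IsJacobiField K a)
    (hb : IsJacobiField K b) (s t : ℝ) :
    a s * deriv b s - deriv a s * b s = a t * deriv b t - deriv a t * b t := by
  have hd : ∀ x, HasDerivAt (fun t => a t * deriv b t - deriv a t * b t) 0 x := by
    intro x
    have := ((ha.hasDeriv x).mul (hb.hasDeriv2 x)).sub ((ha.hasDeriv2 x).mul (hb.hasDeriv x))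
    refine this.congr_deriv ?_
    ring
  exact is_const_of_deriv_eq_zero (fun x => (hd x).differentiableAt) (fun x => (hd x).deriv) s t

theorem IsJacobiField.comb {K a b : ℝ → ℝ} (ha : IsJacobiField K a)
    (hb : IsJacobiField K b) (p q : ℝ) : IsJacobiField K (fun t => p * b t - q * a t) := by
  refine ⟨(contDiff_const.mul hb.1).sub (contDiff_const.mul ha.1), fun t => ?_⟩
  have h1 : deriv (fun t => p * b t - q * a t) = fun t => p * deriv b t - q * deriv a t := by
    funext x
    exact (((hb.hasDeriv x).const_mul p).sub ((ha.hasDeriv x).const_mul q)).deriv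
  have h2 := (((hb.hasDeriv2 t).const_mul p).sub ((ha.hasDeriv2 t).const_mul q)).deriv
  rw [h1]
  change deriv (fun t => p * deriv b t - q * deriv a t) t = _ at h2
  rw [h2]
  ring

/-- Scalar form of Theorem `thm_C`: there exist nonzero `λ₁, λ₂` with
`λ₁ a(t₁) = λ₂ a(t₂)` and `λ₁ b(t₁) = λ₂ b(t₂)` if and only if `t₁` and `t₂`
are conjugate for `K`, i.e., some nontrivial scalar Jacobi field vanishes at both. -/
theorem canonical_map_coincidence_iff_conjugate (K a b : ℝ → ℝ) (hK : Continuous K)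
    (ha : IsJacobiField K a) (hb : IsJacobiField K b)
    (hW : ∃ t₀ : ℝ, a t₀ * deriv b t₀ - deriv a t₀ * b t₀ ≠ 0)
    (t₁ t₂ : ℝ) (ht : t₁ ≠ t₂) :
    (∃ l₁ l₂ : ℝ, l₁ ≠ 0 ∧ l₂ ≠ 0 ∧ l₁ * a t₁ = l₂ * a t₂ ∧ l₁ * b t₁ = l₂ * b t₂) ↔
    (∃ c : ℝ → ℝ, IsJacobiField K c ∧ ¬ (∀ t : ℝ, c t = 0) ∧ c t₁ = 0 ∧ c t₂ = 0) := by
  obtain ⟨t₀, hW⟩ := hW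
  have hW' : ∀ t, a t * deriv b t - deriv a t * b t ≠ 0 := fun t => by
    rwa [ha.wronskian_const hb t t₀]
  constructor
  · rintro ⟨l₁, l₂, h₁, h₂, e₁, e₂⟩
    refine ⟨fun t => a t₁ * b t - b t₁ * a t, ha.comb hb _ _, ?_, by ring, ?_⟩
    · intro h0
      have hd := ((hb.hasDeriv t₁).const_mul (a t₁)).sub ((ha.hasDeriv t₁).const_mul (b t₁))
      have hz : HasDerivAt (fun t => a t₁ * b t - b t₁ * a t) 0 t₁ := by
        rw [show (fun t => a t₁ * b t - b t₁ * a t) = fun _ => 0 from funext h0]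
        exact hasDerivAt_const _ _
      have := hd.unique hz
      exact hW' t₁ (by linarith)
    · refine (mul_eq_zero.1 (?_ : l₂ * (a t₁ * b t₂ - b t₁ * a t₂) = 0)).resolve_left h₂
      linear_combination b t₁ * e₁ - a t₁ * e₂
  · rintro ⟨c, hc, hne, hc₁, hc₂⟩
    obtain ⟨p, hp⟩ : ∃ p, ∀ t, a t * deriv c t - deriv a t * c t = p :=
      ⟨_, fun t => ha.wronskian_const hc t t₀⟩
    obtain ⟨q, hq⟩ : ∃ q, ∀ t, b t * deriv c t - deriv b t * c t = q :=
      ⟨_, fun t => hb.wronskian_const hc t t₀⟩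
    have key : ∀ t, c t * (a t * deriv b t - deriv a t * b t) = p * b t - q * a t := fun t => by
      rw [← hp t, ← hq t]; ring
    have hpq : p ^ 2 + q ^ 2 ≠ 0 := by
      intro h
      have hp0 : p = 0 := by nlinarith [sq_nonneg p, sq_nonneg q]
      have hq0 : q = 0 := by nlinarith [sq_nonneg p, sq_nonneg q]
      refine hne fun t => (mul_eq_zero.1 (?_ : c t * (a t * deriv b t - deriv a t * b t) = 0)).resolve_right
        (hW' t)
      rw [key t, hp0, hq0]; ring
    have hz : ∀ t, c t = 0 → p * b t - q * a t = 0 := fun t h => by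
      rw [← key t, h, zero_mul]
    have hk : ∀ t, c t = 0 → a t * p + b t * q ≠ 0 := by
      intro t h hk
      have h0 := hz t h
      have ha0 : a t = 0 := by
        refine (mul_eq_zero.1 (?_ : a t * (p ^ 2 + q ^ 2) = 0)).resolve_right hpq
        linear_combination p * hk - q * h0
      have hb0 : b t = 0 := by
        refine (mul_eq_zero.1 (?_ : b t * (p ^ 2 + q ^ 2) = 0)).resolve_right hpq
        linear_combination q * hk + p * h0
      exact hW' t (by rw [ha0, hb0]; ring)
    have z₁ := hz t₁ hc₁
    have z₂ := hz t₂ hc₂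
    refine ⟨_, _, hk t₂ hc₂, hk t₁ hc₁, ?_, ?_⟩
    · linear_combination b t₁ * z₂ - b t₂ * z₁
    · linear_combination a t₂ * z₁ - a t₁ * z₂
end

section
/- Let K : ℝ → ℝ be continuous, let c be a nontrivial scalar Jacobi field for K with c(t₁) = c(t₂) = 0 where t₁ < t₂, and let m be the (finite) number of zeros of c in the open interval (t₁, t₂). Then (−1)^m · c'(t₁) · c'(t₂) < 0. In other words, c'(t₁) and c'(t₂) have opposite signs exactly when m is even, and equal signs when m is odd. -/
theorem jacobi_zero_of_init (K c : ℝ → ℝ) (hK : Continuous K)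
    (hc : IsJacobiField K c) (t₀ : ℝ) (h0 : c t₀ = 0) (h1 : deriv c t₀ = 0) (t : ℝ) : c t = 0 := by
  obtain ⟨hC, hE⟩ := hc
  have hd : Differentiable ℝ c := hC.differentiable (by norm_num)
  have hd2 : Differentiable ℝ (deriv c) := by
    have : ContDiff ℝ 1 (deriv c) := by
      have h : ContDiff ℝ (1 + 1) c := by
        convert hC using 1
        norm_num
      exact (contDiff_succ_iff_deriv.1 h).2.2
    exact this.differentiable (by norm_num)
  obtain ⟨A, B, Ht, Ht₀⟩ : ∃ A B, t ∈ Set.Ioo A B ∧ t₀ ∈ Set.Ioo A B := by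
    use (min (-|t|) (-|t₀|) - 1), (max |t| |t₀| + 1)
    grind
  obtain ⟨M, hM⟩ := isCompact_Icc.exists_bound_of_continuousOn (s := Set.Icc A B) hK.continuousOn
  have hv : ∀ s ∈ Set.Ioo A B, LipschitzOnWith (Real.toNNReal (max M 1))
      (fun p : ℝ × ℝ => (p.2, -K s * p.1)) Set.univ := by
    intro s hs
    have hb := hM s (Set.Ioo_subset_Icc_self hs)
    refine LipschitzOnWith.of_dist_le_mul ?_
    intro p _ q _
    rw [Real.coe_toNNReal _ (by positivity)]
    have e1 : |p.1 - q.1| ≤ dist p q := by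
      rw [Prod.dist_eq, ← Real.dist_eq]; exact le_max_left _ _
    have e2 : |p.2 - q.2| ≤ dist p q := by
      rw [Prod.dist_eq, ← Real.dist_eq]; exact le_max_right _ _
    have hD : 0 ≤ dist p q := dist_nonneg
    rw [Prod.dist_eq (x := (p.2, -K s * p.1))]
    refine max_le ?_ ?_
    · change dist p.2 q.2 ≤ _
      rw [Real.dist_eq]
      nlinarith [le_max_right M 1]
    · change dist (-K s * p.1) (-K s * q.1) ≤ _
      rw [Real.dist_eq, ← mul_sub, abs_mul, abs_neg]
      rw [Real.norm_eq_abs] at hb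
      exact mul_le_mul (hb.trans (le_max_left _ _)) e1 (abs_nonneg _) (by positivity)
  have key := ODE_solution_unique_of_mem_Ioo (f := fun s => (c s, deriv c s))
    (g := fun _ => ((0 : ℝ), (0 : ℝ))) (s := fun _ => Set.univ)
    (v := fun s (p : ℝ × ℝ) => (p.2, -K s * p.1)) hv Ht₀ ?_ ?_ (by simp [h0, h1]) Ht
  · exact congrArg Prod.fst key
  · intro s _
    refine ⟨?_, trivial⟩
    have := (hd s).hasDerivAt.prodMk (hd2 s).hasDerivAt
    have e : deriv (deriv c) s = -K s * c s := by linarith [hE s]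
    rw [e] at this
    exact this
  · intro s _
    refine ⟨?_, trivial⟩
    convert hasDerivAt_const s ((0 : ℝ), (0 : ℝ)) using 1
    simp

theorem pos_endpoint (c : ℝ → ℝ) (hd : Differentiable ℝ c) (a b : ℝ) (hab : a < b)
    (ha : c a = 0) (hb : c b = 0) (hp : ∀ t ∈ Set.Ioo a b, 0 < c t) :
    0 ≤ deriv c a ∧ deriv c b ≤ 0 := by
  constructor
  · have h := (hasDerivWithinAt_iff_tendsto_slope' (s := Set.Ioi a) (by simp)).1
      (hd a).hasDerivAt.hasDerivWithinAt
    refine ge_of_tendsto h ?_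
    filter_upwards [Ioo_mem_nhdsGT hab] with t ht
    rw [slope_def_field, ha]
    have := hp t ht
    exact div_nonneg (by linarith) (by linarith [ht.1])
  · have h := (hasDerivWithinAt_iff_tendsto_slope' (s := Set.Iio b) (by simp)).1
      (hd b).hasDerivAt.hasDerivWithinAt
    refine le_of_tendsto h ?_
    filter_upwards [Ioo_mem_nhdsLT hab] with t ht
    rw [slope_def_field, hb]
    have := hp t ht
    exact div_nonpos_of_nonneg_of_nonpos (by linarith) (by linarith [ht.2])

theorem no_zero_case (c : ℝ → ℝ) (hd : Differentiable ℝ c) (a b : ℝ) (hab : a < b)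
    (ha : c a = 0) (hb : c b = 0) (hp : ∀ t ∈ Set.Ioo a b, c t ≠ 0) :
    deriv c a * deriv c b ≤ 0 := by
  have hmid : (a + b) / 2 ∈ Set.Ioo a b := ⟨by linarith, by linarith⟩
  have hpre : IsPreconnected (c '' Set.Ioo a b) :=
    isPreconnected_Ioo.image c hd.continuous.continuousOn
  have hoc := hpre.ordConnected
  have h0 : ¬ (0 : ℝ) ∈ c '' Set.Ioo a b := by
    rintro ⟨t, ht, h⟩
    exact hp t ht h
  rcases lt_or_gt_of_ne (hp _ hmid) with hm | hm
  · have h := pos_endpoint (fun t => -c t) hd.neg a b hab (by simp [ha]) (by simp [hb]) ?_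
    · have e : ∀ x, deriv (fun t => -c t) x = - deriv c x := fun x => deriv.fun_neg
      rw [e, e] at h
      nlinarith [h.1, h.2]
    · intro t ht
      by_contra hh
      exact h0 (hoc.out (Set.mem_image_of_mem c hmid) (Set.mem_image_of_mem c ht)
        ⟨hm.le, by linarith⟩)
  · have h := pos_endpoint c hd a b hab ha hb ?_
    · nlinarith [h.1, h.2]
    · intro t ht
      by_contra hh
      exact h0 (hoc.out (Set.mem_image_of_mem c ht) (Set.mem_image_of_mem c hmid)
        ⟨by linarith, hm.le⟩)

theorem zeros_finite (c : ℝ → ℝ) (hd : Differentiable ℝ c)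
    (hs : ∀ t, c t = 0 → deriv c t ≠ 0) (a b : ℝ) :
    {t ∈ Set.Ioo a b | c t = 0}.Finite := by
  by_contra hinf
  obtain ⟨z, -, hz⟩ := Set.Infinite.exists_accPt_of_subset_isCompact (K := Set.Icc a b) hinf
    isCompact_Icc (fun t ht => Set.Ioo_subset_Icc_self ht.1)
  rw [accPt_iff_frequently_nhdsNE] at hz
  have hcz : c z = 0 := by
    by_contra hne
    have : ∀ᶠ t in nhdsWithin z {z}ᶜ, c t ≠ 0 :=
      (hd.continuous.continuousAt.eventually_ne hne).filter_mono nhdsWithin_le_nhds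
    exact hz (this.mono fun t ht h => ht h.2)
  have := (hd z).hasDerivAt.eventually_ne (c := 0) (hs z hcz)
  exact hz (this.mono fun t ht h => ht h.2)

theorem sign_aux (c : ℝ → ℝ) (hd : Differentiable ℝ c)
    (hs : ∀ t, c t = 0 → deriv c t ≠ 0) (m : ℕ) : ∀ a b : ℝ, a < b → c a = 0 → c b = 0 →
    m = {t ∈ Set.Ioo a b | c t = 0}.ncard → (-1 : ℝ) ^ m * deriv c a * deriv c b < 0 := by
  induction m using Nat.strong_induction_on with
  | _ m ih =>
  intro a b hab ha hb hm
  by_cases hz : ∃ s ∈ Set.Ioo a b, c s = 0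
  · obtain ⟨s, hsm, hcs⟩ := hz
    have f1 := zeros_finite c hd hs a s
    have f2 := zeros_finite c hd hs s b
    have hsplit : {t ∈ Set.Ioo a b | c t = 0} =
        insert s ({t ∈ Set.Ioo a s | c t = 0} ∪ {t ∈ Set.Ioo s b | c t = 0}) := by
      ext t
      simp only [Set.mem_setOf_eq, Set.mem_insert_iff, Set.mem_union, Set.mem_Ioo] at *
      grind
    have hcard : m = {t ∈ Set.Ioo a s | c t = 0}.ncard + {t ∈ Set.Ioo s b | c t = 0}.ncard + 1 := by
      rw [hm, hsplit, Set.ncard_insert_of_notMem (by simp) (f1.union f2),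
        Set.ncard_union_eq _ f1 f2]
      rw [Set.disjoint_left]
      intro t h1 h2
      exact lt_asymm h1.1.2 h2.1.1
    have i1 := ih _ (by omega) a s hsm.1 ha hcs rfl
    have i2 := ih _ (by omega) s b hsm.2 hcs hb rfl
    rw [hcard, pow_succ, pow_add]
    have hpos := mul_pos_of_neg_of_neg i1 i2
    have hsq : 0 < deriv c s ^ 2 := by have := hs s hcs; positivity
    by_contra hcon
    push Not at hcon
    nlinarith [mul_nonneg hcon hsq.le]
  · push Not at hz
    have h0 : m = 0 := by
      rw [hm]
      convert Set.ncard_empty ℝ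
      ext t
      simpa using fun h1 h2 => hz t ⟨h1, h2⟩
    rw [h0, pow_zero, one_mul]
    exact lt_of_le_of_ne (no_zero_case c hd a b hab ha hb hz) (mul_ne_zero (hs a ha) (hs b hb))

/-- If a nontrivial scalar Jacobi field `c` vanishes at `t₁ < t₂` and has `m` zeros in
the open interval `(t₁, t₂)`, then `(−1)^m c'(t₁) c'(t₂) < 0`: the derivatives at the
endpoints have opposite signs exactly when `m` is even, and equal signs when `m` is odd. -/
theorem sign_of_derivatives_at_conjugate_points (K c : ℝ → ℝ) (hK : Continuous K)
    (hc : IsJacobiField K c) (hne : ¬ ∀ t : ℝ, c t = 0)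
    (t₁ t₂ : ℝ) (h12 : t₁ < t₂) (h1 : c t₁ = 0) (h2 : c t₂ = 0)
    (m : ℕ) (hm : m = {t ∈ Set.Ioo t₁ t₂ | c t = 0}.ncard) :
    (-1 : ℝ) ^ m * deriv c t₁ * deriv c t₂ < 0 := by
  exact sign_aux c (hc.1.differentiable (by norm_num))
    (fun t ht h => hne (jacobi_zero_of_init K c hK hc t ht h)) m t₁ t₂ h12 h1 h2 hm
end

section
/- Let σ : ℝ → ℝ be continuous with σ(s) ≥ 0 for all s ∈ [a, b], and let a ≤ t₁ < t₂ ≤ b with ∫_{t₁}^{t₂} σ(s) ds > 0. Define κ₊(t) = exp(−∫_t^b σ(s) ds) and κ₋(t) = exp(−∫_a^t σ(s) ds). Then κ₊(t₁)·κ₋(t₂) − κ₋(t₁)·κ₊(t₂) < 0; in particular, the determinant of the 2×2 matrix [[κ₊(t₁), κ₊(t₂)], [κ₋(t₁), κ₋(t₂)]] is nonzero. -/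
/-- For the attenuated X-ray transform with attenuation `σ ≥ 0` along a geodesic with
parameter interval `[a, b]`, the weights `κ₊(t) = exp(−∫_t^b σ)` and
`κ₋(t) = exp(−∫_a^t σ)` satisfy `κ₊(t₁) κ₋(t₂) − κ₋(t₁) κ₊(t₂) < 0` whenever
`a ≤ t₁ < t₂ ≤ b` and `∫_{t₁}^{t₂} σ > 0`; in particular the determinant of
`[[κ₊(t₁), κ₊(t₂)], [κ₋(t₁), κ₋(t₂)]]` is nonzero (condition (R1)). -/
theorem attenuated_weights_determinant_neg (σ : ℝ → ℝ) (hσcont : Continuous σ)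
    (a b t₁ t₂ : ℝ) (hσ : ∀ s ∈ Set.Icc a b, 0 ≤ σ s)
    (hat : a ≤ t₁) (h12 : t₁ < t₂) (htb : t₂ ≤ b)
    (hpos : 0 < ∫ s in t₁..t₂, σ s)
    (κp κm : ℝ → ℝ)
    (hκp : ∀ t : ℝ, κp t = Real.exp (-∫ s in t..b, σ s))
    (hκm : ∀ t : ℝ, κm t = Real.exp (-∫ s in a..t, σ s)) :
    κp t₁ * κm t₂ - κm t₁ * κp t₂ < 0 ∧
    Matrix.det !![κp t₁, κp t₂; κm t₁, κm t₂] ≠ 0 := by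
  have h1 : (∫ s in t₁..t₂, σ s) + ∫ s in t₂..b, σ s = ∫ s in t₁..b, σ s :=
    intervalIntegral.integral_add_adjacent_intervals
      (hσcont.intervalIntegrable _ _) (hσcont.intervalIntegrable _ _)
  have h2 : (∫ s in a..t₁, σ s) + ∫ s in t₁..t₂, σ s = ∫ s in a..t₂, σ s :=
    intervalIntegral.integral_add_adjacent_intervals
      (hσcont.intervalIntegrable _ _) (hσcont.intervalIntegrable _ _)
  have key : κp t₁ * κm t₂ - κm t₁ * κp t₂ < 0 := by
    rw [hκp, hκp, hκm, hκm, ← Real.exp_add, ← Real.exp_add, sub_neg, Real.exp_lt_exp]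
    linarith
  refine ⟨key, ?_⟩
  rw [Matrix.det_fin_two_of]
  intro h
  linarith [mul_comm (κm t₁) (κp t₂)]
end
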